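/- Let c_r, B > 0 and ϑ ∈ (0,1), and set γ = ϑ/c_r. Let a∞ be a real number with 0 ≤ a∞ ≤ γB = ϑB/c_r, and let (a_k)_{k≥0} be a nonnegative sequence with a₀ ≥ ϑB/c_r satisfying a_{k+1} ≤ (1 − c_rγ)(a_k − a∞) + a∞ for all k. Then for every integer k ≥ ϑ^{−1}·log(a₀c_r/(ϑB)), we have a_k ≤ 2ϑB/c_r. -/

import Mathlib

/-!
Unrolling the recursion bounds `a k` by the convex combination
`(1 - ϑ) ^ k * a 0 + (1 - (1 - ϑ) ^ k) * aInf`. Since `(1 - ϑ) ^ k ≤ exp (-ϑ k)`, the first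
summand drops below any `δ > 0` once `k ≥ ϑ⁻¹ log (a 0 / δ)`, while the second never exceeds
`max aInf 0`. With `δ = ϑ B / cr ≥ aInf` the two together are at most `2 δ`.
-/

open Real

lemma one_sub_pow_le_exp_neg_mul {ρ : ℝ} (hρ : ρ ≤ 1) (n : ℕ) :
    (1 - ρ) ^ n ≤ exp (-(ρ * n)) :=
  calc (1 - ρ) ^ n ≤ exp (-ρ) ^ n :=
        pow_le_pow_left₀ (sub_nonneg.2 hρ) (one_sub_le_exp_neg ρ) n
    _ = exp (-(ρ * n)) := by rw [← exp_nat_mul, mul_neg, mul_comm]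

lemma one_sub_pow_mul_le_of_log_div_le {ρ x δ : ℝ} {n : ℕ} (hρ : ρ ≤ 1) (hx : 0 ≤ x)
    (hδ : 0 < δ) (hn : log (x / δ) ≤ ρ * n) : (1 - ρ) ^ n * x ≤ δ := by
  have hxδ : x ≤ exp (ρ * n) * δ :=
    (div_le_iff₀ hδ).1 ((le_exp_log _).trans (exp_le_exp.2 hn))
  calc (1 - ρ) ^ n * x ≤ exp (-(ρ * n)) * x := by gcongr; exact one_sub_pow_le_exp_neg_mul hρ n
    _ ≤ exp (-(ρ * n)) * (exp (ρ * n) * δ) := by gcongr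
    _ = δ := by rw [← mul_assoc, ← exp_add, neg_add_cancel, exp_zero, one_mul]

lemma le_pow_mul_add_of_affine_rec {a : ℕ → ℝ} {q L : ℝ} (hq : 0 ≤ q)
    (hrec : ∀ k, a (k + 1) ≤ q * (a k - L) + L) (k : ℕ) :
    a k ≤ q ^ k * a 0 + (1 - q ^ k) * L := by
  have hgeom : a k - L ≤ q ^ k * (a 0 - L) :=
    le_geom (u := fun i ↦ a i - L) hq k fun i _ ↦ sub_le_iff_le_add.2 (hrec i)
  linarith

theorem sgd_linear_phase_general {a : ℕ → ℝ} {ϑ aInf δ : ℝ} {k : ℕ} (hϑ : ϑ ∈ Set.Ioc (0 : ℝ) 1)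
    (hδ : 0 < δ) (ha0 : 0 ≤ a 0) (hrec : ∀ k, a (k + 1) ≤ (1 - ϑ) * (a k - aInf) + aInf)
    (hk : ϑ⁻¹ * log (a 0 / δ) ≤ k) : a k ≤ δ + max aInf 0 := by
  obtain ⟨hϑ0, hϑ1⟩ := hϑ
  have hq : 0 ≤ 1 - ϑ := sub_nonneg.2 hϑ1
  have hpow : (1 - ϑ) ^ k ≤ 1 := pow_le_one₀ hq (sub_le_self 1 hϑ0.le)
  have htransient : (1 - ϑ) ^ k * a 0 ≤ δ :=
    one_sub_pow_mul_le_of_log_div_le hϑ1 ha0 hδ ((inv_mul_le_iff₀ hϑ0).1 hk)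
  have hlimit : (1 - (1 - ϑ) ^ k) * aInf ≤ max aInf 0 :=
    calc (1 - (1 - ϑ) ^ k) * aInf ≤ (1 - (1 - ϑ) ^ k) * max aInf 0 :=
          mul_le_mul_of_nonneg_left (le_max_left _ _) (sub_nonneg.2 hpow)
      _ ≤ max aInf 0 :=
          mul_le_of_le_one_left (le_max_right _ _) (sub_le_self 1 (pow_nonneg hq k))
  exact (le_pow_mul_add_of_affine_rec hq hrec k).trans (add_le_add htransient hlimit)

/-- Linear-rate phase of the constant-stepsize backoff scheme: with stepsize `γ = ϑ/c_r`,
if `a∞ ≤ ϑB/c_r ≤ a₀` and the linearized recursion holds, then after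
`k ≥ ϑ⁻¹·log(a₀c_r/(ϑB))` iterations we have `a_k ≤ 2ϑB/c_r`. -/
theorem sgd_linear_phase
    (cr B ϑ γ : ℝ) (hcr : 0 < cr) (hB : 0 < B)
    (hϑ : ϑ ∈ Set.Ioo (0 : ℝ) 1) (hγ : γ = ϑ / cr)
    (aInf : ℝ) (haInf0 : 0 ≤ aInf) (haInf : aInf ≤ γ * B)
    (a : ℕ → ℝ) (hapos : ∀ k, 0 ≤ a k) (ha0 : ϑ * B / cr ≤ a 0)
    (hrec : ∀ k : ℕ, a (k + 1) ≤ (1 - cr * γ) * (a k - aInf) + aInf) :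
    ∀ k : ℕ, ϑ⁻¹ * Real.log (a 0 * cr / (ϑ * B)) ≤ (k : ℝ) → a k ≤ 2 * ϑ * B / cr := by
  intro k hk
  have hδ : 0 < ϑ * B / cr := div_pos (mul_pos hϑ.1 hB) hcr
  rw [hγ, mul_div_cancel₀ _ hcr.ne'] at hrec
  rw [hγ, div_mul_eq_mul_div] at haInf
  rw [← div_div_eq_mul_div] at hk
  calc a k ≤ ϑ * B / cr + max aInf 0 :=
        sgd_linear_phase_general (Set.Ioo_subset_Ioc_self hϑ) hδ (hapos 0) hrec hk
    _ ≤ ϑ * B / cr + ϑ * B / cr := by gcongr; exact max_le haInf hδ.le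
    _ = 2 * ϑ * B / cr := by ring
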